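/- arXiv:2407.16673 — 2 statements merged into one kernel-verified Lean document; each statement's English description precedes it below -/
import Mathlib

section
/- Let (M, 𝔅, μ) be a probability space and f : M → M a measure-preserving measurable map such that μ is ergodic for f. Let V_1, …, V_m be pairwise disjoint measurable sets with ∪_{j=1}^m V_j = M and μ(V_j) > 0 for every j. Define the m × m matrix P by P_{i,j} = μ(f⁻¹(V_i) ∩ V_j) / μ(V_j). Then for every nonempty proper subset J ⊊ {1,…,m} there exist j ∈ J and i ∉ J with P_{i,j} > 0. In other words, no coordinate subspace spanned by a proper nonempty subset of the standard basis vectors of ℝ^m is invariant under P. -/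
/-!
If no transition leaves `J`, then `f⁻¹(V i) ∩ V j` is null for all `j ∈ J`, `i ∉ J`, so the union
`A` of the cells indexed by `J` satisfies `A ⊆ f⁻¹(A)` up to a null set. As `f` preserves the
finite measure `μ`, such an `A` is invariant mod `μ`, and ergodicity makes it null or conull
(`Ergodic.ae_empty_or_univ_of_ae_le_preimage`). Both are impossible: `A` contains a cell of
positive measure because `J` is nonempty, and misses one because `J` is proper.
-/

open MeasureTheory

/-- Irreducibility part of Lemma 4.2: for an ergodic system and a finite measurable
partition into cells of positive measure, the induced transition matrix
`P i j = μ(f⁻¹ V_i ∩ V_j) / μ(V_j)` admits no invariant coordinate subspace: from every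
nonempty proper subset `J` of indices there is a positive transition leaving `J`. -/
theorem ergodic_partition_matrix_irreducible
    {M : Type*} [MeasurableSpace M] (μ : Measure M) [IsProbabilityMeasure μ]
    (f : M → M) (herg : Ergodic f μ)
    {m : ℕ} (V : Fin m → Set M) (hmeas : ∀ j, MeasurableSet (V j))
    (hdisj : Pairwise (Function.onFun Disjoint V))
    (hcover : (⋃ j, V j) = Set.univ)
    (hpos : ∀ j, 0 < μ (V j))
    (P : Matrix (Fin m) (Fin m) ℝ)
    (hP : ∀ i j, P i j = (μ (f ⁻¹' V i ∩ V j)).toReal / (μ (V j)).toReal) :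
    ∀ J : Finset (Fin m), J.Nonempty → J ≠ Finset.univ →
      ∃ j ∈ J, ∃ i ∉ J, 0 < P i j := by
  intro J hJ hJu
  by_contra! hcon
  have hnull : ∀ i ∉ J, ∀ j ∈ J, ∀ᵐ x ∂μ, ¬ (f x ∈ V i ∧ x ∈ V j) := by
    intro i hi j hj
    have hzero : μ (f ⁻¹' V i ∩ V j) = 0 := by
      by_contra hne
      have hPij : 0 < P i j := by
        rw [hP]
        exact div_pos (ENNReal.toReal_pos hne (measure_ne_top μ _))
          (ENNReal.toReal_pos (hpos j).ne' (measure_ne_top μ _))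
      exact absurd (hcon j hj i hi) (not_le.mpr hPij)
    exact measure_eq_zero_iff_ae_notMem.mp hzero
  have hA : MeasurableSet (⋃ j ∈ J, V j) := J.measurableSet_biUnion fun j _ => hmeas j
  have hsub : (⋃ j ∈ J, V j) ≤ᵐ[μ] f ⁻¹' (⋃ j ∈ J, V j) := by
    have hall : ∀ᵐ x ∂μ, ∀ i j, i ∉ J → j ∈ J → ¬ (f x ∈ V i ∧ x ∈ V j) := by
      simp only [ae_all_iff]
      exact fun i j hi hj => hnull i hi j hj
    filter_upwards [hall] with x hx hxA
    obtain ⟨j, hj, hxj⟩ := Set.mem_iUnion₂.mp hxA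
    obtain ⟨i, hi⟩ := Set.mem_iUnion.mp (hcover ▸ Set.mem_univ (f x))
    have hiJ : i ∈ J := by
      by_contra hiJ
      exact hx i j hiJ hj ⟨hi, hxj⟩
    exact Set.mem_iUnion₂.mpr ⟨i, hiJ, hi⟩
  rcases herg.ae_empty_or_univ_of_ae_le_preimage hA.nullMeasurableSet hsub with h | h
  · obtain ⟨j, hj⟩ := hJ
    exact (hpos j).ne' (measure_mono_null (Set.subset_biUnion_of_mem (u := V) hj)
      (ae_eq_empty.mp h))
  · obtain ⟨i, hi⟩ : ∃ i, i ∉ J := by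
      by_contra! hall
      exact hJu (Finset.eq_univ_iff_forall.mpr hall)
    refine (hpos i).ne' (measure_mono_null ?_ (ae_eq_univ.mp h))
    intro x hxi hxA
    obtain ⟨j, hj, hxj⟩ := Set.mem_iUnion₂.mp hxA
    have hij : i ≠ j := fun hij => hi (hij ▸ hj)
    exact Set.disjoint_left.mp (hdisj hij) hxi hxj
end

section
/- Let (M, 𝔅, μ) be a probability space and f : M → M a measure-preserving measurable map such that μ is ergodic for f. Let V_1, …, V_m be pairwise disjoint measurable sets with ∪_{j=1}^m V_j = M and μ(V_j) > 0 for every j, and define the m × m matrix P by P_{i,j} = μ(f⁻¹(V_i) ∩ V_j) / μ(V_j). Then 1 is an eigenvalue of P (viewed as a linear endomorphism of ℝ^m) and its eigenspace {v ∈ ℝ^m : Pv = v} is one-dimensional. -/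
/-!
Write `π j = μ (V j)` and `Q i j = μ (f⁻¹ V_i ∩ V_j)`, so that `P i j = Q i j / π j`. Since `f`
preserves `μ`, the rows of `Q` sum to `π`, hence `P π = π`.

If `P v = v`, the density `w j = v j / π j` satisfies `∑ j, Q i j * w j = π i * w i`. By the maximum
principle `Q i j = 0` whenever `w` is maximal at `i` and not at `j`
(`Q_eq_zero_of_maximal`), so the union `U` of the cells on which `w` is maximal satisfies
`f⁻¹ U ⊆ U` almost everywhere. Ergodicity forces `U` to be null or conull; it contains a cell of
positive measure, and so it contains every cell (`forall_mem_of_invariant_cells`).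
Hence `w` is constant and `v` is a multiple of `π`.
-/

open MeasureTheory Module

/-- The cells cut the preimage of `V i` into pieces, and that preimage has the measure of `V i`. -/
lemma sum_measureReal_preimage_inter {M : Type*} [MeasurableSpace M] {μ : Measure M}
    [IsProbabilityMeasure μ] {f : M → M} (hf : MeasurePreserving f μ μ)
    {m : ℕ} {V : Fin m → Set M} (hmeas : ∀ j, MeasurableSet (V j))
    (hdisj : Pairwise (Function.onFun Disjoint V))
    (hcover : (⋃ j, V j) = Set.univ) (i : Fin m) :
    ∑ j, μ.real (f ⁻¹' V i ∩ V j) = μ.real (V i) := by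
  have hpre : μ.real (f ⁻¹' V i) = μ.real (V i) := by
    simp only [Measure.real, hf.measure_preimage (hmeas i).nullMeasurableSet]
  rw [← hpre, ← measureReal_iUnion_fintype, ← Set.inter_iUnion, hcover, Set.inter_univ]
  · intro j k hjk
    exact (hdisj hjk).mono Set.inter_subset_right Set.inter_subset_right
  · exact fun j => (hf.measurable (hmeas i)).inter (hmeas j)

/-- Irreducibility in ergodic form: a nonempty set `S` of indices that the chain does not enter from
outside consists of all indices. -/
lemma forall_mem_of_invariant_cells {M : Type*} [MeasurableSpace M] {μ : Measure M}
    [IsProbabilityMeasure μ] {f : M → M} (herg : Ergodic f μ)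
    {m : ℕ} {V : Fin m → Set M} (hmeas : ∀ j, MeasurableSet (V j))
    (hdisj : Pairwise (Function.onFun Disjoint V))
    (hcover : (⋃ j, V j) = Set.univ) (hpos : ∀ j, 0 < μ (V j))
    (S : Set (Fin m)) (hne : S.Nonempty)
    (hS : ∀ i ∈ S, ∀ j ∉ S, μ (f ⁻¹' V i ∩ V j) = 0) (j : Fin m) : j ∈ S := by
  set U : Set M := ⋃ i ∈ S, V i with hU
  have hUm : MeasurableSet U := MeasurableSet.biUnion S.to_countable fun i _ => hmeas i
  have hle : f ⁻¹' U ≤ᵐ[μ] U := by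
    rw [ae_le_set]
    refine measure_mono_null (t := ⋃ i ∈ S, ⋃ k ∈ Sᶜ, f ⁻¹' V i ∩ V k) ?_ ?_
    · rintro x ⟨hx, hxU⟩
      simp only [hU, Set.mem_preimage, Set.mem_iUnion, exists_prop, not_exists, not_and] at hx hxU
      obtain ⟨i, hi, hxi⟩ := hx
      obtain ⟨k, hk⟩ := Set.mem_iUnion.1 (hcover.symm ▸ Set.mem_univ x : x ∈ ⋃ j, V j)
      simp only [Set.mem_iUnion]
      exact ⟨i, hi, k, fun hkS => hxU k hkS hk, hxi, hk⟩
    · rw [measure_biUnion_null_iff S.to_countable]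
      intro i hi
      rw [measure_biUnion_null_iff (Set.to_countable _)]
      exact fun k hk => hS i hi k hk
  rcases herg.ae_empty_or_univ_of_preimage_ae_le hUm.nullMeasurableSet hle with h | h
  · obtain ⟨i, hi⟩ := hne
    exact absurd (measure_mono_null (Set.subset_biUnion_of_mem hi) (ae_eq_empty.1 h)) (hpos i).ne'
  · by_contra hj
    refine (hpos j).ne' (measure_mono_null ?_ (ae_eq_univ.1 h))
    intro x hx hxU
    simp only [hU, Set.mem_iUnion, exists_prop] at hxU
    obtain ⟨i, hi, hxi⟩ := hxU
    exact Set.disjoint_left.1 (hdisj (fun h => hj (h ▸ hi) : i ≠ j)) hxi hx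

/-- Maximum principle: if `w i` is the weighted average of `w` with weights given by the `i`-th row
of `Q`, and is also the maximum of `w`, then that row vanishes wherever `w` is not maximal. -/
lemma Q_eq_zero_of_maximal {ι : Type*} [Fintype ι] {Q : ι → ι → ℝ} {p w : ι → ℝ}
    (hQ : ∀ i j, 0 ≤ Q i j) (hrow : ∀ i, ∑ j, Q i j = p i)
    (hw : ∀ i, ∑ j, Q i j * w j = p i * w i) {i : ι} (hi : ∀ j, w j ≤ w i)
    {j : ι} (hj : w j ≠ w i) : Q i j = 0 := by
  have hsum : ∑ k, Q i k * (w i - w k) = 0 := by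
    simp only [mul_sub, Finset.sum_sub_distrib, ← Finset.sum_mul, hrow, hw, sub_self]
  have hzero := (Finset.sum_eq_zero_iff_of_nonneg
    fun k _ => mul_nonneg (hQ i k) (sub_nonneg.2 (hi k))).1 hsum j (Finset.mem_univ j)
  exact (mul_eq_zero.1 hzero).resolve_right (sub_ne_zero.2 hj.symm)

/-- Lemma 4.2: for an ergodic system and a finite measurable partition into cells of
positive measure, the transition matrix `P i j = μ(f⁻¹ V_i ∩ V_j) / μ(V_j)` has `1` as an
eigenvalue, and the corresponding eigenspace is one-dimensional. -/
theorem ergodic_partition_matrix_simple_eigenvalue_one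
    {M : Type*} [MeasurableSpace M] (μ : Measure M) [IsProbabilityMeasure μ]
    (f : M → M) (herg : Ergodic f μ)
    {m : ℕ} (V : Fin m → Set M) (hmeas : ∀ j, MeasurableSet (V j))
    (hdisj : Pairwise (Function.onFun Disjoint V))
    (hcover : (⋃ j, V j) = Set.univ)
    (hpos : ∀ j, 0 < μ (V j))
    (P : Matrix (Fin m) (Fin m) ℝ)
    (hP : ∀ i j, P i j = (μ (f ⁻¹' V i ∩ V j)).toReal / (μ (V j)).toReal) :
    Module.End.HasEigenvalue (Matrix.mulVecLin P) 1 ∧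
      Module.finrank ℝ (Module.End.eigenspace (Matrix.mulVecLin P) 1) = 1 := by
  have hp : ∀ j, 0 < μ.real (V j) := fun j => ENNReal.toReal_pos (hpos j).ne' (measure_ne_top _ _)
  have hrow := sum_measureReal_preimage_inter herg.toMeasurePreserving hmeas hdisj hcover
  obtain ⟨x⟩ : Nonempty M := nonempty_of_isProbabilityMeasure μ
  obtain ⟨i₀, -⟩ := Set.mem_iUnion.1 (hcover.symm ▸ Set.mem_univ x : x ∈ ⋃ j, V j)
  set p : Fin m → ℝ := fun j => μ.real (V j)
  have hmul : ∀ v i, P.mulVecLin v i = ∑ j, μ.real (f ⁻¹' V i ∩ V j) * (v j / p j) := by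
    intro v i
    simp only [Matrix.mulVecLin_apply, Matrix.mulVec, dotProduct, hP]
    exact Finset.sum_congr rfl fun j _ => div_mul_eq_mul_div₀ _ _ _ |>.trans (mul_div_assoc _ _ _)
  have hpe : p ∈ End.eigenspace P.mulVecLin 1 := by
    rw [End.mem_eigenspace_iff, one_smul]
    funext i
    refine (hmul p i).trans (Eq.trans ?_ (hrow i))
    exact Finset.sum_congr rfl fun j _ => by rw [div_self (hp j).ne', mul_one]
  have hp0 : p ≠ 0 := fun h => (hp i₀).ne' (congrFun h i₀)
  refine ⟨End.hasEigenvalue_of_hasEigenvector ⟨hpe, hp0⟩, ?_⟩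
  refine finrank_eq_one_iff'.2 ⟨⟨p, hpe⟩, fun h => hp0 (congrArg Subtype.val h), ?_⟩
  rintro ⟨v, hv⟩
  rw [End.mem_eigenspace_iff, one_smul] at hv
  have : Nonempty (Fin m) := ⟨i₀⟩
  obtain ⟨a, ha⟩ := Finite.exists_max fun j => v j / p j
  have hw : ∀ i, ∑ j, μ.real (f ⁻¹' V i ∩ V j) * (v j / p j) = p i * (v i / p i) := by
    intro i
    rw [← hmul, hv, mul_div_cancel₀ _ (hp i).ne']
  have hconst := forall_mem_of_invariant_cells herg hmeas hdisj hcover hpos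
    {i | v i / p i = v a / p a} ⟨a, rfl⟩ (by
      intro i hi j hj
      simp only [Set.mem_setOf_eq] at hi hj
      refine (measureReal_eq_zero_iff).1 (Q_eq_zero_of_maximal (w := fun j => v j / p j)
        (Q := fun i j => μ.real (f ⁻¹' V i ∩ V j))
        (fun _ _ => measureReal_nonneg) hrow hw (i := i) ?_ ?_)
      · exact fun k => (ha k).trans hi.ge
      · exact fun h => hj (h.trans hi))
  refine ⟨v a / p a, Subtype.ext (funext fun j => ?_)⟩
  have hj : v j / p j = v a / p a := hconst j
  change v a / p a * p j = v j
  rw [← hj, div_mul_cancel₀ _ (hp j).ne']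
end
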